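/- For every integer n ≥ 2 and all c1, c2 ∈ K, the ideal R_n(P) is a Poisson ideal of Z(P) with respect to the (c1,c2)-swapping bracket (i.e., {Z(P), R_n(P)} ⊆ R_n(P)); consequently the (c1,c2)-swapping bracket descends to a well-defined Poisson bracket on the rank n swapping ring Z_n(P) = Z(P)/R_n(P). -/

import Mathlib

noncomputable section

open scoped Classical
open MvPolynomial

set_option maxHeartbeats 1000000
set_option synthInstance.maxHeartbeats 400000

instance fact01 : Fact ((0:ℝ) < 1) := ⟨one_pos⟩

/-- The circle, modelled as `ℝ/ℤ`. -/
abbrev Circle1 : Type := AddCircle (1:ℝ)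

/-- The coordinate in `[0,1)` of the point `x` of the circle obtained after removing the
point `o` and identifying the complement of `o` with an interval. -/
def coordAt (o x : Circle1) : ℝ := ((AddCircle.equivIco 1 0) (x - o) : ℝ)

/-- The sign `△` of a real number, as a rational number in `{-1, 0, 1}`. -/
def sgnQ (a : ℝ) : ℚ := if a < 0 then -1 else if a = 0 then 0 else 1

/-- The linking number `J(rx, sy)` of the chords `rx` and `sy`, computed using the
cut point `o`. -/
def linkingAt (o r x s y : Circle1) : ℚ :=
  (1/2) * (sgnQ (coordAt o r - coordAt o x) * sgnQ (coordAt o r - coordAt o y)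
        * sgnQ (coordAt o y - coordAt o x)
      - sgnQ (coordAt o r - coordAt o x) * sgnQ (coordAt o r - coordAt o s)
        * sgnQ (coordAt o s - coordAt o x))

lemma circle1_infinite : Infinite Circle1 := by
  have h : (Set.Ico (0:ℝ) (0+1)).Infinite := Set.Ico_infinite (by norm_num)
  haveI := h.to_subtype
  exact Infinite.of_injective (fun q : Set.Ico (0:ℝ) (0+1) => (AddCircle.equivIco 1 0).symm q)
    ((AddCircle.equivIco 1 0).symm.injective)

lemma exists_cut (r x s y : Circle1) :
    ∃ o : Circle1, o ≠ r ∧ o ≠ x ∧ o ≠ s ∧ o ≠ y := by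
  haveI : Infinite Circle1 := circle1_infinite
  have hfin : ({r, x, s, y} : Set Circle1).Finite :=
    (((Set.finite_singleton y).insert s).insert x).insert r
  obtain ⟨o, ho⟩ := hfin.infinite_compl.nonempty
  simp only [Set.mem_compl_iff, Set.mem_insert_iff, Set.mem_singleton_iff, not_or] at ho
  exact ⟨o, ho.1, ho.2.1, ho.2.2.1, ho.2.2.2⟩

/-- The linking number `J(rx, sy)` of the chords `rx` and `sy` (computed with respect to
some cut point distinct from the four points; by the independence of the choice this is
the linking number). -/
def linkQ (r x s y : Circle1) : ℚ := linkingAt (exists_cut r x s y).choose r x s y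

/-- The set of points of the circle `l`, listed in anticlockwise (cyclic) order:
there is a cut point `o` avoiding them such that the induced coordinates are
strictly increasing along the list. -/
def AnticlockwiseList (l : List Circle1) : Prop :=
  ∃ o : Circle1, (∀ p ∈ l, p ≠ o) ∧ (l.map (coordAt o)).Chain' (· < ·)

/-- Index type for the generators `xy` of the swapping ring of `P`
(one generator for each ordered pair of distinct points; the generators `xx`
are identified with `0`). -/
abbrev SwapIdx (P : Set Circle1) : Type := {q : (↥P) × (↥P) // q.1 ≠ q.2}

/-- The swapping ring `Z(P)`: the polynomial ring over `K` on the generators `xy`,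
`x ≠ y ∈ P` (this realizes the commutative ring generated by all ordered pairs `xy`
subject to the relations `xx = 0`). -/
abbrev SwapRing (K : Type) [Field K] (P : Set Circle1) : Type := MvPolynomial (SwapIdx P) K

/-- The generator `xy` of the swapping ring (equal to `0` when `x = y`). -/
def gen (K : Type) [Field K] (P : Set Circle1) (x y : ↥P) : SwapRing K P :=
  if h : x ≠ y then MvPolynomial.X (⟨(x, y), h⟩ : SwapIdx P) else 0

/-- The value of the `(c1,c2)`-swapping bracket on two generators `rx` and `sy`:
`J(rx,sy) • (c1 • ry·sx + c2 • rx·sy)`. -/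
def genBr (K : Type) [Field K] (P : Set Circle1) (c1 c2 : K) (g g' : SwapIdx P) :
    SwapRing K P :=
  ((linkQ g.1.1.1 g.1.2.1 g'.1.1.1 g'.1.2.1 : ℚ) : K) •
    (c1 • (gen K P g.1.1 g'.1.2 * gen K P g'.1.1 g.1.2)
      + c2 • (gen K P g.1.1 g.1.2 * gen K P g'.1.1 g'.1.2))

/-- The `(c1,c2)`-swapping bracket on `Z(P)`: the biderivation extending
`{rx, sy} = J(rx,sy)·(c1·ry·sx + c2·rx·sy)` by the Leibniz rule in each argument.
The swapping bracket is the case `c1 = 1, c2 = 0`. -/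
def swapBr (K : Type) [Field K] (P : Set Circle1) (c1 c2 : K) (a b : SwapRing K P) :
    SwapRing K P :=
  (MvPolynomial.mkDerivation K
    (fun g : SwapIdx P => (MvPolynomial.mkDerivation K (genBr K P c1 c2 g)) b)) a

/-- `Δ((x_1,…,x_m),(y_1,…,y_m)) = det (x_i y_j)` in the swapping ring. -/
def Dmat (K : Type) [Field K] (P : Set Circle1) (m : ℕ) (xs ys : Fin m → ↥P) :
    SwapRing K P :=
  Matrix.det (Matrix.of fun i j => gen K P (xs i) (ys j))

/-- The ideal `R_n(P)` of `Z(P)` generated by all `(n+1)×(n+1)` determinants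
`Δ((x_1,…,x_{n+1}),(y_1,…,y_{n+1}))`. -/
def Rideal (K : Type) [Field K] (P : Set Circle1) (n : ℕ) : Ideal (SwapRing K P) :=
  Ideal.span {D : SwapRing K P | ∃ xs ys : Fin (n+1) → ↥P, D = Dmat K P (n+1) xs ys}

/-- The rank `n` swapping ring `Z_n(P) = Z(P)/R_n(P)`. -/
abbrev ZnRing (K : Type) [Field K] (P : Set Circle1) (n : ℕ) : Type :=
  SwapRing K P ⧸ Rideal K P n

/-- The quotient map `Z(P) → Z_n(P)`. -/
def toZn (K : Type) [Field K] (P : Set Circle1) (n : ℕ) :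
    SwapRing K P →+* ZnRing K P n := Ideal.Quotient.mk (Rideal K P n)

/-- The total fraction ring `Q_n(P)` of the rank `n` swapping ring. -/
abbrev QnRing (K : Type) [Field K] (P : Set Circle1) (n : ℕ) : Type :=
  Localization (nonZeroDivisors (ZnRing K P n))

/-- The canonical map `Z(P) → Q_n(P)`. -/
def toQn (K : Type) [Field K] (P : Set Circle1) (n : ℕ) :
    SwapRing K P →+* QnRing K P n :=
  (algebraMap (ZnRing K P n) (QnRing K P n)).comp (toZn K P n)

/-- `Bq` is the extension to the total fraction ring `Q_n(P)` of the `(c1,c2)`-swapping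
bracket of the rank `n` swapping algebra: it agrees with the swapping bracket on the image
of `Z(P)` and satisfies the Leibniz rule in both arguments (these properties determine it
uniquely). -/
def IsQnBracket (K : Type) [Field K] (P : Set Circle1) (n : ℕ) (c1 c2 : K)
    (Bq : QnRing K P n → QnRing K P n → QnRing K P n) : Prop :=
  (∀ a b : SwapRing K P,
      Bq (toQn K P n a) (toQn K P n b) = toQn K P n (swapBr K P c1 c2 a b)) ∧
  (∀ a b c : QnRing K P n, Bq (a * b) c = a * Bq b c + b * Bq a c) ∧
  (∀ a b c : QnRing K P n, Bq a (b * c) = b * Bq a c + c * Bq a b)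

/-- The `n`-tuple `(x_1, …, x_a, y_1, …, y_b, z_1, …, z_{n-a-b})` built from three
families of points (families are indexed from `0`, i.e. `x 0 = x_1`). -/
def rows3 {α : Type*} {n : ℕ} (x y z : ℕ → α) (a b : ℕ) : Fin n → α :=
  fun i => if (i : ℕ) < a then x (i : ℕ)
    else if (i : ℕ) < a + b then y ((i : ℕ) - a)
    else z ((i : ℕ) - (a + b))

/-- The `n`-tuple `(x_1, …, x_a, y_1, …, y_b, z_1, …, z_{n-1-a-b}, w)` built from three
families of points and a final point `w`. -/
def rows3s {α : Type*} {n : ℕ} (x y z : ℕ → α) (a b : ℕ) (w : α) : Fin n → α :=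
  fun i => if (i : ℕ) < a then x (i : ℕ)
    else if (i : ℕ) < a + b then y ((i : ℕ) - a)
    else if (i : ℕ) < n - 1 then z ((i : ℕ) - (a + b))
    else w

/-- The `n`-tuple `(x_1, …, x_{n-1}, t)`. -/
def snocTup {α : Type*} {n : ℕ} (x : ℕ → α) (t : α) : Fin n → α :=
  fun i => if (i : ℕ) < n - 1 then x (i : ℕ) else t

/-- The list `f_a, f_{a-1}, …, f_1` (descending enumeration). -/
def descPts (f : ℕ → Circle1) (a : ℕ) : List Circle1 := ((List.range a).map f).reverse

/-- The list `f_1, f_2, …, f_a` (ascending enumeration). -/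
def ascPts (f : ℕ → Circle1) (a : ℕ) : List Circle1 := (List.range a).map f

/-- The `(n×n)`-determinant quotient `Δ(numR, v)/Δ(denR, v)` as an element of the total
fraction ring `Q_n(P)`. -/
def EQuot (K : Type) [Field K] (P : Set Circle1) (n : ℕ)
    (numR denR v : Fin n → ↥P)
    (h : toZn K P n (Dmat K P n denR v) ∈ nonZeroDivisors (ZnRing K P n)) :
    QnRing K P n :=
  Localization.mk (toZn K P n (Dmat K P n numR v)) ⟨toZn K P n (Dmat K P n denR v), h⟩

/-!
By the identity `△(a) + △(b) + △(c) = -△(a)△(b)△(c)` for `a + b + c = 0`, the linking number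
`J(rx, sy)` is half an alternating sum of the four signs between an endpoint of `rx` and an
endpoint of `sy`. Hence it does not depend on the cut and is additive in each chord: for fixed
`a`, `b` there is `α` with `J(ab, xy) = α y - α x`. Jacobi's formula for the derivative of a
determinant then writes `{ab, Δ(x, y)}` as a combination of `Δ(x, y)` and of the determinants
obtained by replacing some `x i` by `a` or some `y j` by `b`; all of these lie in `R_n(P)`.

The Jacobi identity only has to be checked on generators `rx`, `sy`, `tz`. There additivity reduces
the jacobiator to a product of `rz·sx·ty - ry·sz·tx` with a quadratic expression in linking
numbers. The first factor vanishes if the three chords share an endpoint, the second if they do not.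
-/

section Determinant

variable {R A n : Type*} [CommRing R] [CommRing A] [Algebra R A] [DecidableEq n]

theorem derivation_prod {M : Type*} [AddCommGroup M] [Module A M] [Module R M]
    (D : Derivation R A M) (s : Finset n) (f : n → A) :
    D (∏ i ∈ s, f i) = ∑ i ∈ s, (∏ j ∈ s.erase i, f j) • D (f i) := by
  induction s using Finset.induction_on with
  | empty => simp
  | insert a s ha ih =>
    rw [Finset.prod_insert ha, D.leibniz, ih, Finset.sum_insert ha, Finset.erase_insert ha,
      Finset.smul_sum, add_comm]
    refine congrArg₂ _ rfl (Finset.sum_congr rfl fun i hi ↦ ?_)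
    have hai : a ≠ i := fun h ↦ ha (h ▸ hi)
    rw [Finset.erase_insert_of_ne hai, Finset.prod_insert (by simp [ha]), mul_smul]

variable [Fintype n]

theorem det_updateCol_eq_sum (M : Matrix n n A) (j : n) (w : n → A) :
    (M.updateCol j w).det = ∑ i, M.adjugate j i * w i := by
  rw [← Matrix.cramer_apply, Matrix.cramer_eq_adjugate_mulVec]
  rfl

theorem det_updateRow_eq_sum (M : Matrix n n A) (i : n) (w : n → A) :
    (M.updateRow i w).det = ∑ j, M.adjugate j i * w j := by
  rw [← Matrix.cramer_transpose_apply, Matrix.cramer_eq_adjugate_mulVec,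
    ← Matrix.adjugate_transpose]
  rfl

theorem derivation_det (D : Derivation R A A) (M : Matrix n n A) :
    D M.det = ∑ j, ∑ i, M.adjugate j i * D (M i j) := by
  have det_updateCol (j : n) : (M.updateCol j fun i ↦ D (M i j)).det =
      ∑ σ : Equiv.Perm n, (Equiv.Perm.sign σ : A) *
        ((∏ k ∈ Finset.univ.erase j, M (σ k) k) * D (M (σ j) j)) := by
    rw [Matrix.det_apply']
    refine Finset.sum_congr rfl fun σ _ ↦ congrArg _ ?_
    rw [← Finset.prod_erase_mul _ _ (Finset.mem_univ j), Matrix.updateCol_self]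
    refine congrArg (· * _) (Finset.prod_congr rfl fun k hk ↦ ?_)
    rw [Matrix.updateCol_ne (Finset.ne_of_mem_erase hk)]
  simp only [← det_updateCol_eq_sum _ _ (fun i ↦ D (M i _)), det_updateCol]
  rw [Matrix.det_apply', map_sum, Finset.sum_comm]
  refine Finset.sum_congr rfl fun σ _ ↦ ?_
  rw [D.leibniz, D.map_intCast, smul_zero, add_zero, derivation_prod, Finset.smul_sum]
  rfl

theorem derivation_det_of_apply_eq (D : Derivation R A A) (M : Matrix n n A) (c₁ c₂ : A)
    (u v α β : n → A)
    (hD : ∀ i j, D (M i j) = (α j - β i) * (c₁ * (v j * u i) + c₂ * M i j)) :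
    D M.det = c₁ * (∑ j, α j * v j * (M.updateCol j u).det
        - ∑ i, β i * u i * (M.updateRow i v).det)
      + c₂ * (∑ j, α j - ∑ i, β i) * M.det := by
  have det_eq_col (j : n) : M.det = ∑ i, M.adjugate j i * M i j := by
    rw [← det_updateCol_eq_sum, Matrix.updateCol_eq_self]
  have det_eq_row (i : n) : M.det = ∑ j, M.adjugate j i * M i j := by
    rw [← det_updateRow_eq_sum, Matrix.updateRow_eq_self]
  have sum_col : (∑ j, α j) * M.det = ∑ j, ∑ i, α j * (M.adjugate j i * M i j) := by
    simp_rw [Finset.sum_mul, ← Finset.mul_sum, ← det_eq_col]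
  have sum_row : (∑ i, β i) * M.det = ∑ j, ∑ i, β i * (M.adjugate j i * M i j) := by
    rw [Finset.sum_comm]
    simp_rw [Finset.sum_mul, ← Finset.mul_sum, ← det_eq_row]
  rw [derivation_det, mul_assoc c₂, sub_mul, sum_col, sum_row]
  simp_rw [det_updateCol_eq_sum, det_updateRow_eq_sum, Finset.mul_sum]
  rw [Finset.sum_comm (f := fun i j ↦ β i * u i * (M.adjugate j i * v j))]
  simp_rw [← Finset.sum_sub_distrib, Finset.mul_sum, ← Finset.sum_add_distrib, hD]
  refine Finset.sum_congr rfl fun j _ ↦ Finset.sum_congr rfl fun i _ ↦ ?_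
  ring

end Determinant

/-- A biderivation of the `R`-algebra `A`, encoded as a derivation from `A` to its module of
derivations: `B a b` is then `R`-linear and satisfies the Leibniz rule in each argument. -/
abbrev Biderivation (R A : Type*) [CommRing R] [CommRing A] [Algebra R A] : Type _ :=
  Derivation R A (Derivation R A A)

namespace Biderivation

variable {R A : Type*} [CommRing R] [CommRing A] [Algebra R A]

/-- Antisymmetry of the biderivation `B`, one of the two axioms of a Poisson bracket. -/
def IsAntisymm (B : Biderivation R A) : Prop := ∀ a b, B a b = -B b a

/-- The cyclic sum whose vanishing is the Jacobi identity for `B`. -/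
def jacobiator (B : Biderivation R A) (a b c : A) : A :=
  B a (B b c) + B b (B c a) + B c (B a b)

/-- `I` is a Poisson ideal for the bracket `B`: it is stable under all the derivations `B a`. -/
def IsPoissonIdeal (B : Biderivation R A) (I : Ideal A) : Prop := ∀ a, ∀ r ∈ I, B a r ∈ I

/-- The derivation `a ↦ B a b`, obtained by fixing the second argument of `B`. -/
def fixRight (B : Biderivation R A) (b : A) : Derivation R A A :=
  LinearMap.compDer
    { toFun := fun D : Derivation R A A ↦ D b
      map_add' := fun _ _ ↦ rfl
      map_smul' := fun _ _ ↦ rfl } B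

theorem fixRight_apply (B : Biderivation R A) (a b : A) : B.fixRight b a = B a b := rfl

theorem isAntisymm_of_adjoin_eq_top {B : Biderivation R A} {s : Set A}
    (hs : Algebra.adjoin R s = ⊤) (h : ∀ a ∈ s, ∀ b ∈ s, B a b = -B b a) : B.IsAntisymm := by
  have fixRight_of_mem {b : A} (hb : b ∈ s) : B.fixRight b = -B b :=
    Derivation.ext_of_adjoin_eq_top s hs fun a ha ↦ h a ha b hb
  intro a b
  have eq_fixRight : B a = -B.fixRight a :=
    Derivation.ext_of_adjoin_eq_top s hs fun b hb ↦ by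
      rw [← fixRight_apply, fixRight_of_mem hb, Derivation.neg_apply, Derivation.neg_apply,
        fixRight_apply]
  rw [eq_fixRight, Derivation.neg_apply, fixRight_apply]

theorem jacobiator_rotate (B : Biderivation R A) (a b c : A) :
    B.jacobiator a b c = B.jacobiator b c a := by
  unfold jacobiator
  ring

theorem IsAntisymm.jacobiator_eq {B : Biderivation R A} (hB : B.IsAntisymm) (a b c : A) :
    B.jacobiator a b c = (⁅B a, B b⁆ - B (B a b)) c := by
  rw [jacobiator, Derivation.sub_apply, Derivation.commutator_apply, hB c a, hB c (B a b), map_neg]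
  ring

theorem IsAntisymm.jacobiator_eq_zero_of_adjoin_eq_top {B : Biderivation R A} (hB : B.IsAntisymm)
    {s : Set A} (hs : Algebra.adjoin R s = ⊤)
    (h : ∀ a ∈ s, ∀ b ∈ s, ∀ c ∈ s, B.jacobiator a b c = 0) (a b c : A) :
    B.jacobiator a b c = 0 := by
  -- For antisymmetric `B` the jacobiator is a derivation in its last, hence in each, argument.
  have extend {a b : A} (hab : ∀ c ∈ s, B.jacobiator a b c = 0) (c : A) :
      B.jacobiator a b c = 0 := by
    have : ⁅B a, B b⁆ - B (B a b) = 0 :=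
      Derivation.ext_of_adjoin_eq_top s hs fun c hc ↦ (hB.jacobiator_eq a b c).symm.trans (hab c hc)
    rw [hB.jacobiator_eq, this, Derivation.zero_apply]
  refine extend (fun c hc ↦ ?_) c
  rw [← jacobiator_rotate]
  refine extend (fun b hb ↦ ?_) b
  rw [← jacobiator_rotate]
  exact extend (fun a ha ↦ by rw [← jacobiator_rotate]; exact h a ha b hb c hc) a

theorem isPoissonIdeal_span {B : Biderivation R A} {s t : Set A} (hs : Algebra.adjoin R s = ⊤)
    (h : ∀ a ∈ s, ∀ r ∈ t, B a r ∈ Ideal.span t) : B.IsPoissonIdeal (Ideal.span t) := by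
  intro a r hr
  have apply_mem {a : A} (ha : a ∈ s) : B a r ∈ Ideal.span t := by
    induction hr using Submodule.span_induction with
    | mem r hr => exact h a ha r hr
    | zero => rw [map_zero]; exact zero_mem _
    | add r r' _ _ hr hr' => rw [map_add]; exact add_mem hr hr'
    | smul x r hr hBr =>
      rw [smul_eq_mul, Derivation.leibniz]
      exact add_mem (Ideal.mul_mem_left _ _ hBr) (Ideal.mul_mem_right _ _ hr)
  have mkQ_comp_eq_zero : (Ideal.span t).mkQ.compDer (B.fixRight r) = 0 :=
    Derivation.ext_of_adjoin_eq_top s hs fun a ha ↦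
      (Submodule.Quotient.mk_eq_zero _).2 (apply_mem ha)
  exact (Submodule.Quotient.mk_eq_zero _).1 (DFunLike.congr_fun mkQ_comp_eq_zero a)

namespace IsPoissonIdeal

variable {B : Biderivation R A} {I : Ideal A}

theorem map_mk_eq_zero (hI : B.IsPoissonIdeal I) (a r : A)
    (hr : Ideal.Quotient.mkₐ R I r = 0) : Ideal.Quotient.mkₐ R I (B a r) = 0 :=
  Ideal.Quotient.eq_zero_iff_mem.2 (hI a r (Ideal.Quotient.eq_zero_iff_mem.1 hr))

/-- The derivation of `A ⧸ I` induced by `B a`. -/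
def quotientDerivation (hI : B.IsPoissonIdeal I) (a : A) : Derivation R (A ⧸ I) (A ⧸ I) :=
  Derivation.liftOfSurjective (f := Ideal.Quotient.mkₐ R I) (d := B a)
    (Ideal.Quotient.mkₐ_surjective R I) (hI.map_mk_eq_zero a)

theorem quotientDerivation_mk (hI : B.IsPoissonIdeal I) (a b : A) :
    hI.quotientDerivation a (Ideal.Quotient.mk I b) = Ideal.Quotient.mk I (B a b) :=
  Derivation.liftOfSurjective_apply (f := Ideal.Quotient.mkₐ R I)
    (Ideal.Quotient.mkₐ_surjective R I) (hI.map_mk_eq_zero a) b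

theorem quotientDerivation_congr (hI : B.IsPoissonIdeal I) (hB : B.IsAntisymm) {a a' : A}
    (h : Ideal.Quotient.mk I a = Ideal.Quotient.mk I a') :
    hI.quotientDerivation a = hI.quotientDerivation a' := by
  ext u
  obtain ⟨b, rfl⟩ := Ideal.Quotient.mk_surjective u
  rw [quotientDerivation_mk, quotientDerivation_mk, Ideal.Quotient.eq, ← Derivation.sub_apply,
    ← map_sub, hB]
  exact neg_mem (hI b _ (Ideal.Quotient.eq.1 h))

/-- The biderivation of `A ⧸ I` induced by an antisymmetric biderivation `B` of `A`. It is evaluated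
at an arbitrary representative of its first argument; the choice is irrelevant because antisymmetry
makes `I` stable under `B` in that argument too. -/
def quotient (hI : B.IsPoissonIdeal I) (hB : B.IsAntisymm) : Biderivation R (A ⧸ I) :=
  have apply_eq {u : A ⧸ I} {a : A} (h : Ideal.Quotient.mk I a = u) (b : A) :
      hI.quotientDerivation u.out (Ideal.Quotient.mk I b) = Ideal.Quotient.mk I (B a b) := by
    rw [← hI.quotientDerivation_mk,
      hI.quotientDerivation_congr hB ((Ideal.Quotient.mk_out u).trans h.symm)]
  have mk_smul (r : R) (a : A) : Ideal.Quotient.mk I (r • a) = r • Ideal.Quotient.mk I a :=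
    map_smul (Ideal.Quotient.mkₐ R I) r a
  Derivation.mk'
    { toFun := fun u ↦ hI.quotientDerivation u.out
      map_add' := fun u v ↦ Derivation.ext <| Ideal.Quotient.mk_surjective.forall.2 fun b ↦ by
        rw [apply_eq (a := u.out + v.out) (by simp)]
        simp [quotientDerivation_mk]
      map_smul' := fun r u ↦ Derivation.ext <| Ideal.Quotient.mk_surjective.forall.2 fun b ↦ by
        rw [apply_eq (a := r • u.out) (by rw [mk_smul, Ideal.Quotient.mk_out])]
        simp [quotientDerivation_mk, mk_smul] }
    fun u v ↦ Derivation.ext <| Ideal.Quotient.mk_surjective.forall.2 fun b ↦ by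
      rw [LinearMap.coe_mk, AddHom.coe_mk, apply_eq (a := u.out * v.out) (by simp)]
      simp [quotientDerivation_mk]

theorem quotient_mk_mk (hI : B.IsPoissonIdeal I) (hB : B.IsAntisymm) (a b : A) :
    hI.quotient hB (Ideal.Quotient.mk I a) (Ideal.Quotient.mk I b) =
      Ideal.Quotient.mk I (B a b) := by
  rw [← hI.quotientDerivation_mk, ← hI.quotientDerivation_congr hB (Ideal.Quotient.mk_out _)]
  rfl

theorem isAntisymm_quotient (hI : B.IsPoissonIdeal I) (hB : B.IsAntisymm) :
    (hI.quotient hB).IsAntisymm := by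
  intro u v
  obtain ⟨a, rfl⟩ := Ideal.Quotient.mk_surjective u
  obtain ⟨b, rfl⟩ := Ideal.Quotient.mk_surjective v
  rw [quotient_mk_mk, quotient_mk_mk, hB, map_neg]

theorem jacobiator_quotient (hI : B.IsPoissonIdeal I) (hB : B.IsAntisymm) (a b c : A) :
    (hI.quotient hB).jacobiator (Ideal.Quotient.mk I a) (Ideal.Quotient.mk I b)
      (Ideal.Quotient.mk I c) = Ideal.Quotient.mk I (B.jacobiator a b c) := by
  simp only [jacobiator, quotient_mk_mk, map_add]

end IsPoissonIdeal

end Biderivation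

section LinkingNumber

theorem sgnQ_neg (a : ℝ) : sgnQ (-a) = -sgnQ a := by
  unfold sgnQ
  grind

theorem sgnQ_add_add_eq_neg_mul {a b c : ℝ} (h : a + b + c = 0) :
    sgnQ a + sgnQ b + sgnQ c = -(sgnQ a * sgnQ b * sgnQ c) := by
  unfold sgnQ
  grind

theorem sgnQ_mul_add_mul_add_mul {a b c : ℝ} (h : a + b + c = 0) (hne : a ≠ 0 ∨ b ≠ 0) :
    sgnQ a * sgnQ b + sgnQ b * sgnQ c + sgnQ c * sgnQ a = -1 := by
  unfold sgnQ
  grind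

theorem coordAt_injective (o : Circle1) : Function.Injective (coordAt o) :=
  Subtype.val_injective.comp
    ((AddCircle.equivIco 1 0).injective.comp (sub_left_injective (b := o)))

theorem coordAt_mem_Ico (o a : Circle1) : coordAt o a ∈ Set.Ico (0 : ℝ) 1 := by
  simpa [coordAt] using (AddCircle.equivIco 1 0 (a - o)).2

theorem coe_coordAt (o a : Circle1) : (coordAt o a : Circle1) = a - o :=
  (AddCircle.equivIco 1 0).symm_apply_apply (a - o)

theorem coordAt_eq_of_coe_eq {o a : Circle1} {t : ℝ} (ht : t ∈ Set.Ico (0 : ℝ) 1)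
    (h : (t : Circle1) = a - o) : coordAt o a = t := by
  rw [coordAt, ← h, AddCircle.equivIco_coe_eq (by simpa using ht)]

theorem coordAt_eq_coordAt_zero_sub_add_ite (o a : Circle1) :
    coordAt o a = coordAt 0 a - coordAt 0 o + if coordAt 0 a < coordAt 0 o then 1 else 0 := by
  have ⟨ha₀, ha₁⟩ := coordAt_mem_Ico 0 a
  have ⟨ho₀, ho₁⟩ := coordAt_mem_Ico 0 o
  refine coordAt_eq_of_coe_eq ?_ ?_
  · split_ifs <;> constructor <;> linarith
  · split_ifs <;> simp [coe_coordAt]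

/-- The sign of the difference of the coordinates of `a` and `b` when the circle is cut at `o`. -/
def cutSign (o a b : Circle1) : ℚ := sgnQ (coordAt o a - coordAt o b)

theorem cutSign_comm (o a b : Circle1) : cutSign o a b = -cutSign o b a := by
  rw [cutSign, cutSign, ← sgnQ_neg, neg_sub]

theorem cutSign_mul_add_mul_add_mul (o : Circle1) {a b c : Circle1} (h : ¬(a = b ∧ b = c)) :
    cutSign o a b * cutSign o b c + cutSign o b c * cutSign o c a
      + cutSign o c a * cutSign o a b = -1 := by
  refine sgnQ_mul_add_mul_add_mul (by ring) ?_
  rwa [sub_ne_zero, sub_ne_zero, (coordAt_injective o).ne_iff, (coordAt_injective o).ne_iff,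
    ← not_and_or]

-- Moving the cut changes the sign by a coboundary `f a - f b`, which cancels in linking numbers.
theorem cutSign_eq_cutSign_zero_add (o a b : Circle1) :
    cutSign o a b = cutSign 0 a b + ((if coordAt 0 a < coordAt 0 o then 2 else 0)
      - if coordAt 0 b < coordAt 0 o then 2 else 0) := by
  have ⟨ha₀, ha₁⟩ := coordAt_mem_Ico 0 a
  have ⟨hb₀, hb₁⟩ := coordAt_mem_Ico 0 b
  simp only [cutSign, coordAt_eq_coordAt_zero_sub_add_ite o, sgnQ]
  grind

theorem linkingAt_eq_cutSign (o r x s y : Circle1) :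
    linkingAt o r x s y =
      (1 / 2) * (cutSign o r y - cutSign o x y - cutSign o r s + cutSign o x s) := by
  have triple (p : Circle1) : cutSign o r x * cutSign o r p * cutSign o p x =
      cutSign o r p - cutSign o x p - cutSign o r x := by
    have sum_eq : cutSign o r p + cutSign o p x + cutSign o x r =
        -(cutSign o r p * cutSign o p x * cutSign o x r) := sgnQ_add_add_eq_neg_mul (by ring)
    rw [cutSign_comm o x r] at sum_eq
    rw [cutSign_comm o x p]
    linear_combination -sum_eq
  have linkingAt_eq : linkingAt o r x s y = (1 / 2) *
      (cutSign o r x * cutSign o r y * cutSign o y x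
        - cutSign o r x * cutSign o r s * cutSign o s x) := rfl
  rw [linkingAt_eq, triple, triple]
  ring

theorem linkQ_eq_cutSign (r x s y : Circle1) :
    linkQ r x s y = (1 / 2) * (cutSign 0 r y - cutSign 0 x y - cutSign 0 r s + cutSign 0 x s) := by
  rw [linkQ, linkingAt_eq_cutSign]
  simp only [cutSign_eq_cutSign_zero_add (exists_cut r x s y).choose]
  ring

theorem linkQ_comm (r x s y : Circle1) : linkQ r x s y = -linkQ s y r x := by
  rw [linkQ_eq_cutSign, linkQ_eq_cutSign, cutSign_comm 0 s x, cutSign_comm 0 y x,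
    cutSign_comm 0 s r, cutSign_comm 0 y r]
  ring

theorem linkQ_eq_sub (r x s y p : Circle1) : linkQ r x s y = linkQ r x p y - linkQ r x p s := by
  simp only [linkQ_eq_cutSign]
  ring

theorem linkQ_self_right (r x s : Circle1) : linkQ r x s s = 0 := by
  rw [linkQ_eq_sub r x s s s, sub_self]

theorem linkQ_self_left (r s y : Circle1) : linkQ r r s y = 0 := by
  rw [linkQ_comm, linkQ_self_right, neg_zero]

theorem linkQ_mul_linkQ_cyclic_sum_eq_zero {r x s y t z : Circle1}
    (h : ¬∃ p, (p = r ∨ p = x) ∧ (p = s ∨ p = y) ∧ (p = t ∨ p = z)) :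
    linkQ s y t z * linkQ r x s z + linkQ t z r x * linkQ s y t x
      + linkQ r x s y * linkQ t z r y = 0 := by
  have triple {a b c : Circle1} (ha : a = r ∨ a = x) (hb : b = s ∨ b = y) (hc : c = t ∨ c = z) :
      cutSign 0 a b * cutSign 0 b c - cutSign 0 b c * cutSign 0 a c
        - cutSign 0 a c * cutSign 0 a b = -1 := by
    have := cutSign_mul_add_mul_add_mul 0 (a := a) (b := b) (c := c)
      fun ⟨hab, hbc⟩ ↦ h ⟨a, ha, hab ▸ hb, hab ▸ hbc ▸ hc⟩
    rw [cutSign_comm 0 c a] at this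
    linear_combination this
  simp only [linkQ_eq_cutSign, cutSign_comm 0 t r, cutSign_comm 0 z r, cutSign_comm 0 s x,
    cutSign_comm 0 y x, cutSign_comm 0 t x, cutSign_comm 0 z x, cutSign_comm 0 t y,
    cutSign_comm 0 z y]
  -- Up to the factor `1 / 4`, the sum is the alternating sum of the left-hand sides of `triple`
  -- over the choices of an endpoint of each chord.
  linear_combination (1 / 4) *
    (triple (.inl rfl) (.inl rfl) (.inl rfl) - triple (.inl rfl) (.inl rfl) (.inr rfl)
      - triple (.inl rfl) (.inr rfl) (.inl rfl) + triple (.inl rfl) (.inr rfl) (.inr rfl)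
      - triple (.inr rfl) (.inl rfl) (.inl rfl) + triple (.inr rfl) (.inl rfl) (.inr rfl)
      + triple (.inr rfl) (.inr rfl) (.inl rfl) - triple (.inr rfl) (.inr rfl) (.inr rfl))

end LinkingNumber

section SwappingBracket

variable {K : Type} [Field K] {P : Set Circle1}

theorem gen_self (x : P) : gen K P x x = 0 := by simp [gen]

theorem X_eq_gen (g : SwapIdx P) : (X g : SwapRing K P) = gen K P g.1.1 g.1.2 := by
  rw [gen, dif_pos g.2]

theorem adjoin_gen_eq_top :
    Algebra.adjoin K {a : SwapRing K P | ∃ x y, a = gen K P x y} = ⊤ := by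
  rw [eq_top_iff, ← adjoin_range_X]
  refine Algebra.adjoin_mono ?_
  rintro _ ⟨g, rfl⟩
  exact ⟨_, _, X_eq_gen g⟩

/-- The `(c1,c2)`-swapping bracket `swapBr`, bundled with its Leibniz rules as a biderivation. -/
def swapBiderivation (K : Type) [Field K] (P : Set Circle1) (c1 c2 : K) :
    Biderivation K (SwapRing K P) :=
  mkDerivation K fun g ↦ mkDerivation K (genBr K P c1 c2 g)

theorem swapBiderivation_apply (c1 c2 : K) (a b : SwapRing K P) :
    swapBiderivation K P c1 c2 a b = swapBr K P c1 c2 a b := by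
  have : (swapBiderivation K P c1 c2).fixRight b =
      mkDerivation K fun g ↦ mkDerivation K (genBr K P c1 c2 g) b := by
    refine derivation_ext fun g ↦ ?_
    rw [Biderivation.fixRight_apply, swapBiderivation, mkDerivation_X, mkDerivation_X]
  exact congrArg (fun D : Derivation K (SwapRing K P) (SwapRing K P) ↦ D a) this

/-- The linking number of two chords with endpoints in `P`, as a constant of the swapping ring. -/
def linkC (K : Type) [Field K] {P : Set Circle1} (r x s y : P) : SwapRing K P :=
  C (linkQ r x s y : K)

theorem swapBiderivation_gen_gen (c1 c2 : K) (r x s y : P) :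
    swapBiderivation K P c1 c2 (gen K P r x) (gen K P s y) = linkC K r x s y *
      (C c1 * (gen K P r y * gen K P s x) + C c2 * (gen K P r x * gen K P s y)) := by
  by_cases hrx : r = x
  · subst hrx
    simp [gen_self, linkC, linkQ_self_left]
  by_cases hsy : s = y
  · subst hsy
    simp [gen_self, linkC, linkQ_self_right]
  have apply_X_X (g g' : SwapIdx P) :
      swapBiderivation K P c1 c2 (X g) (X g') = genBr K P c1 c2 g g' := by
    rw [swapBiderivation, mkDerivation_X, mkDerivation_X]
  have apply_gen_gen := apply_X_X ⟨(r, x), hrx⟩ ⟨(s, y), hsy⟩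
  rw [X_eq_gen, X_eq_gen] at apply_gen_gen
  rw [apply_gen_gen, genBr]
  simp only [smul_eq_C_mul, linkC]

theorem linkC_comm (r x s y : P) : linkC K r x s y = -linkC K s y r x := by
  rw [linkC, linkC, linkQ_comm, Rat.cast_neg, C_neg]

theorem isAntisymm_swapBiderivation (c1 c2 : K) : (swapBiderivation K P c1 c2).IsAntisymm := by
  refine Biderivation.isAntisymm_of_adjoin_eq_top adjoin_gen_eq_top ?_
  rintro _ ⟨r, x, rfl⟩ _ ⟨s, y, rfl⟩
  rw [swapBiderivation_gen_gen, swapBiderivation_gen_gen, linkC_comm]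
  ring

theorem Dmat_mem_Rideal {n : ℕ} (xs ys : Fin (n + 1) → P) :
    Dmat K P (n + 1) xs ys ∈ Rideal K P n :=
  Ideal.subset_span ⟨xs, ys, rfl⟩

theorem det_updateCol_gen {m : ℕ} (xs ys : Fin m → P) (j : Fin m) (b : P) :
    ((Matrix.of fun i j ↦ gen K P (xs i) (ys j)).updateCol j fun i ↦ gen K P (xs i) b).det =
      Dmat K P m xs (Function.update ys j b) := by
  rw [Dmat]
  congr 1
  ext i k
  rcases eq_or_ne k j with rfl | hk <;> simp [*]

theorem det_updateRow_gen {m : ℕ} (xs ys : Fin m → P) (i : Fin m) (a : P) :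
    ((Matrix.of fun i j ↦ gen K P (xs i) (ys j)).updateRow i fun j ↦ gen K P a (ys j)).det =
      Dmat K P m (Function.update xs i a) ys := by
  rw [Dmat]
  congr 1
  ext k j
  rcases eq_or_ne k i with rfl | hk <;> simp [*]

section CharZero

variable [CharZero K]

theorem linkC_eq_sub (r x s y p : P) :
    linkC K r x s y = linkC K r x p y - linkC K r x p s := by
  rw [linkC, linkC, linkC, linkQ_eq_sub _ _ _ _ p, Rat.cast_sub, C_sub]

theorem linkC_mul_linkC_cyclic_sum_mul_sub_eq_zero (r x s y t z : P) :
    (linkC K s y t z * linkC K r x s z + linkC K t z r x * linkC K s y t x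
      + linkC K r x s y * linkC K t z r y) *
    (gen K P r z * gen K P s x * gen K P t y - gen K P r y * gen K P s z * gen K P t x) = 0 := by
  by_cases h : ∃ p, (p = r ∨ p = x) ∧ (p = s ∨ p = y) ∧ (p = t ∨ p = z)
  · refine mul_eq_zero_of_right _ ?_
    obtain ⟨p, rfl | rfl, rfl | rfl, rfl | rfl⟩ := h <;> first | ring1 | simp [gen_self]
  · refine mul_eq_zero_of_left ?_ _
    have cyclic_sum : linkQ s y t z * linkQ r x s z + linkQ t z r x * linkQ s y t x
        + linkQ r x s y * linkQ t z r y = 0 :=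
      linkQ_mul_linkQ_cyclic_sum_eq_zero (by simpa [Subtype.ext_iff] using h)
    simp only [linkC, ← C_mul, ← C_add, ← Rat.cast_mul, ← Rat.cast_add, cyclic_sum, Rat.cast_zero,
      C_0]

theorem jacobiator_swapBiderivation_gen (c1 c2 : K) (r x s y t z : P) :
    (swapBiderivation K P c1 c2).jacobiator (gen K P r x) (gen K P s y) (gen K P t z) = 0 := by
  have map_const (a : SwapRing K P) (k : K) : swapBiderivation K P c1 c2 a (C k) = 0 :=
    derivation_C _ _
  have map_linkC (a : SwapRing K P) (r x s y : P) :
      swapBiderivation K P c1 c2 a (linkC K r x s y) = 0 := map_const _ _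
  have exchange (r x s y t z : P) :
      linkC K r x s z = linkC K r x s y + linkC K r x t z - linkC K r x t y := by
    rw [linkC_eq_sub r x s z r, linkC_eq_sub r x s y r, linkC_eq_sub r x t z r,
      linkC_eq_sub r x t y r]
    ring
  have cyclic_sum := linkC_mul_linkC_cyclic_sum_mul_sub_eq_zero (K := K) r x s y t z
  simp only [Biderivation.jacobiator, swapBiderivation_gen_gen, Derivation.leibniz, map_add,
    map_linkC, map_const, smul_eq_mul]
  rw [exchange r x s y t z, exchange s y t z r x, exchange t z r x s y, linkC_comm r x t z,
    linkC_comm s y r x, linkC_comm t z s y] at cyclic_sum ⊢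
  linear_combination (C c1 * C c1) * cyclic_sum

theorem jacobiator_swapBiderivation (c1 c2 : K) (a b c : SwapRing K P) :
    (swapBiderivation K P c1 c2).jacobiator a b c = 0 := by
  refine (isAntisymm_swapBiderivation c1 c2).jacobiator_eq_zero_of_adjoin_eq_top
    adjoin_gen_eq_top ?_ a b c
  rintro _ ⟨r, x, rfl⟩ _ ⟨s, y, rfl⟩ _ ⟨t, z, rfl⟩
  exact jacobiator_swapBiderivation_gen c1 c2 r x s y t z

theorem swapBiderivation_gen_Dmat (c1 c2 : K) {m : ℕ} (a b : P) (xs ys : Fin m → P) :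
    swapBiderivation K P c1 c2 (gen K P a b) (Dmat K P m xs ys) =
      C c1 * (∑ j, linkC K a b a (ys j) * gen K P a (ys j) * Dmat K P m xs (Function.update ys j b)
        - ∑ i, linkC K a b a (xs i) * gen K P (xs i) b * Dmat K P m (Function.update xs i a) ys)
      + C c2 * gen K P a b * (∑ j, linkC K a b a (ys j) - ∑ i, linkC K a b a (xs i))
        * Dmat K P m xs ys := by
  simp only [← det_updateCol_gen, ← det_updateRow_gen]
  refine derivation_det_of_apply_eq _ _ _ _ _ _ _ _ fun i j ↦ ?_
  rw [Matrix.of_apply, swapBiderivation_gen_gen, linkC_eq_sub a b (xs i) (ys j) a, mul_assoc (C c2)]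

theorem isPoissonIdeal_Rideal (c1 c2 : K) (n : ℕ) :
    (swapBiderivation K P c1 c2).IsPoissonIdeal (Rideal K P n) := by
  refine Biderivation.isPoissonIdeal_span adjoin_gen_eq_top ?_
  rintro _ ⟨a, b, rfl⟩ _ ⟨xs, ys, rfl⟩
  rw [swapBiderivation_gen_Dmat]
  have mul_Dmat_mem (f : SwapRing K P) (xs ys : Fin (n + 1) → P) :
      f * Dmat K P (n + 1) xs ys ∈ Rideal K P n := Ideal.mul_mem_left _ _ (Dmat_mem_Rideal xs ys)
  exact add_mem (Ideal.mul_mem_left _ _ (sub_mem (sum_mem fun _ _ ↦ mul_Dmat_mem _ _ _)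
    (sum_mem fun _ _ ↦ mul_Dmat_mem _ _ _))) (mul_Dmat_mem _ _ _)

end CharZero

end SwappingBracket

/-- For every `n ≥ 2` and all `c1, c2 ∈ K`, the ideal `R_n(P)` is a Poisson
ideal of `Z(P)` for the `(c1,c2)`-swapping bracket, i.e. `{Z(P), R_n(P)} ⊆ R_n(P)`;
consequently the `(c1,c2)`-swapping bracket descends to a well-defined Poisson bracket on
the rank `n` swapping ring `Z_n(P) = Z(P)/R_n(P)`. -/
theorem Rideal_is_poisson_ideal (K : Type) [Field K] [CharZero K] (P : Set Circle1)
    (n : ℕ) (hn : 2 ≤ n) (c1 c2 : K) :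
    (∀ a r : SwapRing K P, r ∈ Rideal K P n → swapBr K P c1 c2 a r ∈ Rideal K P n) ∧
    (∃ B : ZnRing K P n → ZnRing K P n → ZnRing K P n,
      (∀ a b : SwapRing K P,
        B (toZn K P n a) (toZn K P n b) = toZn K P n (swapBr K P c1 c2 a b)) ∧
      (∀ u w : ZnRing K P n, B u w = - B w u) ∧
      (∀ u w s : ZnRing K P n, B (u * w) s = u * B w s + w * B u s) ∧
      (∀ u w s : ZnRing K P n, B u (w * s) = w * B u s + s * B u w) ∧
      (∀ u w s : ZnRing K P n, B u (B w s) + B w (B s u) + B s (B u w) = 0)) := by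
  have hB := isAntisymm_swapBiderivation (P := P) c1 c2
  have hI := isPoissonIdeal_Rideal (P := P) c1 c2 n
  refine ⟨fun a r hr ↦ ?_, fun u w ↦ hI.quotient hB u w, fun a b ↦ ?_, hI.isAntisymm_quotient hB,
    fun u w s ↦ ((hI.quotient hB).fixRight s).leibniz u w,
    fun u w s ↦ (hI.quotient hB u).leibniz w s, fun u w s ↦ ?_⟩
  · rw [← swapBiderivation_apply]
    exact hI a r hr
  · rw [← swapBiderivation_apply]
    exact hI.quotient_mk_mk hB a b
  · obtain ⟨a, rfl⟩ := Ideal.Quotient.mk_surjective u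
    obtain ⟨b, rfl⟩ := Ideal.Quotient.mk_surjective w
    obtain ⟨c, rfl⟩ := Ideal.Quotient.mk_surjective s
    exact (hI.jacobiator_quotient hB a b c).trans (by rw [jacobiator_swapBiderivation, map_zero])

end
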